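/- Assume: ‖H‖ ≤ K_H; |f1 - f0 - ⟨g, η⟩ - (1/2)⟨A η, η⟩| ≤ (L_H/2)‖η‖³; ‖G - g‖ ≤ δ_g; ‖(H - A) η‖ ≤ δ_H ‖η‖; σ ≥ 2 L_H; δ_g ≤ 9 δ_H² / (4σ); η^C := -α G where α ≥ 0 is a global minimizer of t ↦ m(-t G) over t ≥ 0; m(η) ≤ m(η^C); ‖G‖ > ε_g; and δ_H ≤ min{1/18, (1-ρ_TH)/9} · (√(K_H² + 4σ ε_g) - K_H). Then f0 - f1 ≥ ρ_TH · (-m(η)), i.e., the acceptance ratio ρ = (f0 - f1)/(-m(η)) satisfies ρ ≥ ρ_TH. (Lemma 3.3, case (a).) -/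

import Mathlib

open RealInnerProductSpace

/-! The model decreases at least as much as over the steepest-descent step of length `r`, where `r`
is the positive root of `σ r ^ 2 + K r = ε`; this gives `-m η ≥ (2 / 3) σ r ^ 3`. On the other
hand, the cubic term of the model beats the Taylor remainder by `(σ / 12) ‖η‖ ^ 3`, which absorbs
the errors of the inexact derivatives up to `18 δ_H ^ 3 / σ ^ 2`, whatever the length of `η`. As
`δ_H` is a small multiple of `σ r`, the latter is at most `1 - ρ_TH` times the former. -/

section CubicModel

variable {E : Type*} [SeminormedAddCommGroup E] [InnerProductSpace ℝ E]

/-- The cubic-regularized model `m` with gradient `G`, Hessian `H` and regularization parameter `σ`,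
for the change of the cost function from the current iterate; so it vanishes at `0`. -/
noncomputable def cubicModel (G : E) (H : E →L[ℝ] E) (σ : ℝ) (ξ : E) : ℝ :=
  ⟪G, ξ⟫ + (1 / 2) * ⟪H ξ, ξ⟫ + (σ / 3) * ‖ξ‖ ^ 3

lemma real_inner_apply_self_le_of_opNorm_le {H : E →L[ℝ] E} {K : ℝ} (hH : ‖H‖ ≤ K) (ξ : E) :
    ⟪H ξ, ξ⟫ ≤ K * ‖ξ‖ ^ 2 :=
  calc ⟪H ξ, ξ⟫ ≤ ‖H ξ‖ * ‖ξ‖ := real_inner_le_norm _ _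
    _ ≤ K * ‖ξ‖ * ‖ξ‖ := by gcongr; exact H.le_of_opNorm_le hH ξ
    _ = K * ‖ξ‖ ^ 2 := by ring

lemma cubicModel_neg_smul_le {G : E} {H : E →L[ℝ] E} {K r : ℝ} (σ : ℝ) (hG : ‖G‖ ≠ 0)
    (hH : ‖H‖ ≤ K) (hr : 0 ≤ r) :
    cubicModel G H σ (-((r / ‖G‖) • G)) ≤ -(r * ‖G‖) + K / 2 * r ^ 2 + σ / 3 * r ^ 3 := by
  have hnorm : ‖-((r / ‖G‖) • G)‖ = r := by
    rw [norm_neg, norm_smul, Real.norm_of_nonneg (by positivity), div_mul_cancel₀ r hG]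
  have hinner : ⟪G, -((r / ‖G‖) • G)⟫ = -(r * ‖G‖) := by
    rw [inner_neg_right, real_inner_smul_right, real_inner_self_eq_norm_sq]
    field_simp
  have hquad := real_inner_apply_self_le_of_opNorm_le hH (-((r / ‖G‖) • G))
  rw [hnorm] at hquad
  rw [cubicModel, hinner, hnorm]
  linarith

/-- The length `r` of the steepest-descent step used to bound the model decrease: for `0 < σ` and
`0 ≤ ε`, the larger root of `σ r ^ 2 + K r = ε`. -/
noncomputable def cauchyRadius (K σ ε : ℝ) : ℝ :=
  (√(K ^ 2 + 4 * σ * ε) - K) / (2 * σ)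

lemma two_mul_mul_cauchyRadius (K ε : ℝ) {σ : ℝ} (hσ : σ ≠ 0) :
    2 * σ * cauchyRadius K σ ε = √(K ^ 2 + 4 * σ * ε) - K :=
  mul_div_cancel₀ _ (mul_ne_zero two_ne_zero hσ)

lemma cauchyRadius_nonneg (K : ℝ) {σ ε : ℝ} (hσ : 0 ≤ σ) (hε : 0 ≤ ε) :
    0 ≤ cauchyRadius K σ ε := by
  have hsqrt : K ≤ √(K ^ 2 + 4 * σ * ε) :=
    Real.le_sqrt_of_sq_le (le_add_of_nonneg_right (by positivity))
  exact div_nonneg (sub_nonneg.mpr hsqrt) (by positivity)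

lemma mul_cauchyRadius_sq_add (K : ℝ) {σ ε : ℝ} (hσ : 0 < σ) (hε : 0 ≤ ε) :
    σ * cauchyRadius K σ ε ^ 2 + K * cauchyRadius K σ ε = ε := by
  have hsq : (2 * σ * cauchyRadius K σ ε + K) ^ 2 = K ^ 2 + 4 * σ * ε := by
    rw [two_mul_mul_cauchyRadius K ε hσ.ne', sub_add_cancel, Real.sq_sqrt (by positivity)]
  apply mul_left_cancel₀ (show 4 * σ ≠ 0 by positivity)
  linear_combination hsq

lemma cubicModel_cauchyRadius_le {G : E} {H : E →L[ℝ] E} {K σ ε : ℝ} (hσ : 0 < σ)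
    (hH : ‖H‖ ≤ K) (hε : 0 < ε) (hG : ε ≤ ‖G‖) :
    cubicModel G H σ (-((cauchyRadius K σ ε / ‖G‖) • G)) ≤
      -(2 / 3 * σ * cauchyRadius K σ ε ^ 3) := by
  have hr := cauchyRadius_nonneg K hσ.le hε.le
  have hroot := mul_cauchyRadius_sq_add K hσ hε.le
  have hK : 0 ≤ K := (norm_nonneg H).trans hH
  set r := cauchyRadius K σ ε
  calc cubicModel G H σ (-((r / ‖G‖) • G))
      ≤ -(r * ‖G‖) + K / 2 * r ^ 2 + σ / 3 * r ^ 3 :=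
        cubicModel_neg_smul_le σ (hε.trans_le hG).ne' hH hr
    _ ≤ -(r * ε) + K / 2 * r ^ 2 + σ / 3 * r ^ 3 := by gcongr
    _ = -(2 / 3 * σ * r ^ 3) - K / 2 * r ^ 2 := by rw [← hroot]; ring
    _ ≤ -(2 / 3 * σ * r ^ 3) := sub_le_self _ (by positivity)

lemma sub_cubicModel_le {G g η : E} {H A : E →L[ℝ] E} {L δg δH f₀ f₁ : ℝ} (σ : ℝ)
    (hTaylor : f₁ - f₀ - ⟪g, η⟫ - (1 / 2) * ⟪A η, η⟫ ≤ L / 2 * ‖η‖ ^ 3)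
    (hg : ‖G - g‖ ≤ δg) (hA : ‖(H - A) η‖ ≤ δH * ‖η‖) :
    f₁ - f₀ - cubicModel G H σ η ≤
      δg * ‖η‖ + δH / 2 * ‖η‖ ^ 2 + (L / 2 - σ / 3) * ‖η‖ ^ 3 := by
  have hgrad : ⟪g, η⟫ - ⟪G, η⟫ ≤ δg * ‖η‖ := by
    rw [← inner_sub_left]
    refine (real_inner_le_norm _ _).trans ?_
    rw [norm_sub_rev]
    gcongr
  have hhess : ⟪A η, η⟫ - ⟪H η, η⟫ ≤ δH * ‖η‖ * ‖η‖ := by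
    rw [← inner_sub_left]
    refine (real_inner_le_norm _ _).trans ?_
    rw [norm_sub_rev]
    gcongr
    exact hA
  rw [cubicModel]
  linarith

end CubicModel

lemma cubic_error_le {σ δg δH s : ℝ} (hσ : 0 < σ) (hδH : 0 ≤ δH)
    (hδg : δg ≤ 9 * δH ^ 2 / (4 * σ)) (hs : 0 ≤ s) :
    δg * s + δH / 2 * s ^ 2 - σ / 12 * s ^ 3 ≤ 18 * δH ^ 3 / σ ^ 2 := by
  -- The cubic is maximal at `s ≈ 5.6 δH / σ`; the rounding `6 δH / σ` gives the squared factor.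
  have hgap : 0 ≤ ((σ * s - 6 * δH) ^ 2 * (σ * s + 6 * δH) + 9 * δH ^ 2 * (σ * s)) /
      (12 * σ ^ 2) := by positivity
  calc δg * s + δH / 2 * s ^ 2 - σ / 12 * s ^ 3
      ≤ 9 * δH ^ 2 / (4 * σ) * s + δH / 2 * s ^ 2 - σ / 12 * s ^ 3 := by gcongr
    _ = 18 * δH ^ 3 / σ ^ 2 -
        ((σ * s - 6 * δH) ^ 2 * (σ * s + 6 * δH) + 9 * δH ^ 2 * (σ * s)) / (12 * σ ^ 2) := by
      field_simp
      ring
    _ ≤ 18 * δH ^ 3 / σ ^ 2 := sub_le_self _ hgap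

lemma cubic_error_le_cauchy_decrease {σ δH ρ r : ℝ} (hσ : 0 < σ) (hδH : 0 ≤ δH) (hρ : ρ ≤ 1)
    (hr : 0 ≤ r) (hδHr : δH ≤ min (1 / 18) ((1 - ρ) / 9) * (2 * σ * r)) :
    18 * δH ^ 3 / σ ^ 2 ≤ (1 - ρ) * (2 / 3 * σ * r ^ 3) := by
  have : 0 ≤ 1 - ρ := sub_nonneg.mpr hρ
  have hδ₁ : δH ≤ 1 / 18 * (2 * σ * r) := hδHr.trans (by gcongr; exact min_le_left _ _)
  have hδ₂ : δH ≤ (1 - ρ) / 9 * (2 * σ * r) := hδHr.trans (by gcongr; exact min_le_right _ _)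
  calc 18 * δH ^ 3 / σ ^ 2 = 18 * (δH ^ 2 * δH) / σ ^ 2 := by ring
    _ ≤ 18 * ((1 / 18 * (2 * σ * r)) ^ 2 * ((1 - ρ) / 9 * (2 * σ * r))) / σ ^ 2 := by gcongr
    _ = 2 / 27 * ((1 - ρ) * (2 / 3 * σ * r ^ 3)) := by field_simp; ring
    _ ≤ (1 - ρ) * (2 / 3 * σ * r ^ 3) := mul_le_of_le_one_left (by positivity) (by norm_num)

theorem success_criterion_gradient_case_general
    {E : Type*} [SeminormedAddCommGroup E] [InnerProductSpace ℝ E]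
    {G g η : E} {H A : E →L[ℝ] E} {σ L K δg δH ε ρ f₀ f₁ : ℝ}
    (hσ : 0 < σ) (hδH : 0 ≤ δH) (hε : 0 < ε) (hρ : ρ ≤ 1) (hH : ‖H‖ ≤ K)
    (hTaylor : f₁ - f₀ - ⟪g, η⟫ - (1 / 2) * ⟪A η, η⟫ ≤ L / 2 * ‖η‖ ^ 3)
    (hg : ‖G - g‖ ≤ δg) (hA : ‖(H - A) η‖ ≤ δH * ‖η‖) (hL : 2 * L ≤ σ)
    (hδg : δg ≤ 9 * δH ^ 2 / (4 * σ))
    (hη : ∀ t : ℝ, 0 ≤ t → cubicModel G H σ η ≤ cubicModel G H σ (-(t • G)))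
    (hG : ε ≤ ‖G‖)
    (hδHε : δH ≤ min (1 / 18) ((1 - ρ) / 9) * (√(K ^ 2 + 4 * σ * ε) - K)) :
    ρ * -cubicModel G H σ η ≤ f₀ - f₁ := by
  have hr := cauchyRadius_nonneg K hσ.le hε.le
  have hdecrease : 2 / 3 * σ * cauchyRadius K σ ε ^ 3 ≤ -cubicModel G H σ η :=
    le_neg_of_le_neg <| (hη _ (by positivity)).trans (cubicModel_cauchyRadius_le hσ hH hε hG)
  rw [← two_mul_mul_cauchyRadius K ε hσ.ne'] at hδHε
  have herror : f₁ - f₀ - cubicModel G H σ η ≤ (1 - ρ) * -cubicModel G H σ η :=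
    calc f₁ - f₀ - cubicModel G H σ η
        ≤ δg * ‖η‖ + δH / 2 * ‖η‖ ^ 2 + (L / 2 - σ / 3) * ‖η‖ ^ 3 :=
          sub_cubicModel_le σ hTaylor hg hA
      _ ≤ δg * ‖η‖ + δH / 2 * ‖η‖ ^ 2 + -(σ / 12) * ‖η‖ ^ 3 := by gcongr; linarith
      _ = δg * ‖η‖ + δH / 2 * ‖η‖ ^ 2 - σ / 12 * ‖η‖ ^ 3 := by ring
      _ ≤ 18 * δH ^ 3 / σ ^ 2 := cubic_error_le hσ hδH hδg (norm_nonneg η)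
      _ ≤ (1 - ρ) * (2 / 3 * σ * cauchyRadius K σ ε ^ 3) :=
          cubic_error_le_cauchy_decrease hσ hδH hρ hr hδHε
      _ ≤ (1 - ρ) * -cubicModel G H σ η :=
          mul_le_mul_of_nonneg_left hdecrease (sub_nonneg.mpr hρ)
  linarith

/-- Lemma 3.3, case (a): with a large inexact gradient and sufficiently accurate
gradient/Hessian approximations, the iteration is successful. -/
theorem success_criterion_gradient_case
    {E : Type*} [NormedAddCommGroup E] [InnerProductSpace ℝ E] [FiniteDimensional ℝ E]
    (G g η : E) (H A : E →L[ℝ] E) (hH : IsSelfAdjoint H) (hA : IsSelfAdjoint A)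
    (σ L_H K_H δ_g δ_H ε_g ρ_TH : ℝ) (hσ : 0 < σ) (hL : 0 < L_H) (hK : 0 < K_H)
    (hδg : δ_g ∈ Set.Ioo (0 : ℝ) 1) (hδH : δ_H ∈ Set.Ioo (0 : ℝ) 1)
    (hεg : ε_g ∈ Set.Ioo (0 : ℝ) 1) (hρ : ρ_TH ∈ Set.Ioo (0 : ℝ) 1)
    (m : E → ℝ)
    (hm : ∀ ξ : E, m ξ = ⟪G, ξ⟫ + (1 / 2) * ⟪H ξ, ξ⟫ + (σ / 3) * ‖ξ‖ ^ 3)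
    (f0 f1 : ℝ)
    (hHK : ‖H‖ ≤ K_H)
    (hTaylor : |f1 - f0 - ⟪g, η⟫ - (1 / 2) * ⟪A η, η⟫| ≤ (L_H / 2) * ‖η‖ ^ 3)
    (hGg : ‖G - g‖ ≤ δ_g)
    (hHa : ‖(H - A) η‖ ≤ δ_H * ‖η‖)
    (hσL : σ ≥ 2 * L_H)
    (hδgH : δ_g ≤ 9 * δ_H ^ 2 / (4 * σ))
    (α : ℝ) (hα : 0 ≤ α)
    (hmin : ∀ t : ℝ, 0 ≤ t → m (-(α • G)) ≤ m (-(t • G)))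
    (ηC : E) (hηC : ηC = -(α • G))
    (hmη : m η ≤ m ηC)
    (hGbig : ‖G‖ > ε_g)
    (hδHsmall : δ_H ≤ min (1 / 18) ((1 - ρ_TH) / 9) * (Real.sqrt (K_H ^ 2 + 4 * σ * ε_g) - K_H)) :
    f0 - f1 ≥ ρ_TH * (-m η) := by
  obtain rfl : m = cubicModel G H σ := funext hm
  exact success_criterion_gradient_case_general hσ hδH.1.le hεg.1 hρ.2.le hHK
    (le_of_abs_le hTaylor) hGg hHa hσL hδgH (fun t ht => hmη.trans (hηC ▸ hmin t ht)) hGbig.le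
    hδHsmall
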